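/- arXiv:2106.06495 — 3 statements merged into one kernel-verified Lean document; each statement's English description precedes it below -/
import Mathlib

section
/- Let f, g be convex functions on the unit disk (f, g ∈ 𝒦) and let α, β ≥ 0 with α + 2β ≤ 2. Then Re(1 + z C_{α,β}[f,g]''(z)/C_{α,β}[f,g]'(z)) > 0 for all z in the unit disk, i.e., C_{α,β}[f,g] is convex. -/
open Complex Metric

/-- The class 𝔉: analytic on the unit disk, `f 0 = 0`, `f' 0 = 1`, `f'` nonvanishing. -/
def Fclass (f : ℂ → ℂ) : Prop :=
  DifferentiableOn ℂ f (ball 0 1) ∧ f 0 = 0 ∧ deriv f 0 = 1 ∧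
    ∀ z ∈ ball (0:ℂ) 1, deriv f z ≠ 0

/-- Normalized convex functions: `Re (1 + z f''/f') > 0` on the unit disk. -/
def Kclass (f : ℂ → ℂ) : Prop :=
  Fclass f ∧ ∀ z ∈ ball (0:ℂ) 1, 0 < (1 + z * deriv (deriv f) z / deriv f z).re

/-- The normalized boundary Schwarz lemma. -/
theorem im_eq_zero_and_one_le_re_of_hasDerivAt_one {φ : ℂ → ℂ} {d : ℂ}
    (hd : DifferentiableOn ℂ φ (ball 0 1)) (h1 : HasDerivAt φ d 1) (hφ0 : φ 0 = 0)
    (hφ1 : φ 1 = 1) (hle : ∀ z, ‖z‖ ≤ 1 → ‖φ z‖ ≤ 1) : d.im = 0 ∧ 1 ≤ d.re := by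
  constructor
  · have hexp : HasDerivAt (fun w : ℂ => Complex.exp (w * I)) I 0 := by
      simpa using ((hasDerivAt_id (0 : ℂ)).mul_const I).cexp
    have hcomp : HasDerivAt (fun w : ℂ => φ (Complex.exp (w * I))) (d * I) ((0 : ℝ) : ℂ) := by
      refine HasDerivAt.comp (h₂ := φ) _ ?_ (by simpa using hexp)
      simpa using h1
    have hmax : IsLocalMax (fun x : ℝ => (φ (Complex.exp (x * I))).re) 0 := by
      refine Filter.Eventually.of_forall fun x => ?_
      have := (re_le_norm _).trans (hle (Complex.exp (x * I)) (norm_exp_ofReal_mul_I x).le)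
      simpa [hφ1] using this
    simpa using hmax.hasDerivAt_eq_zero hcomp.real_of_complex
  · have hre : HasDerivAt (fun x : ℝ => (φ x).re) d.re 1 :=
      HasDerivAt.real_of_complex (by simpa using h1)
    have hslope := (hasDerivAt_iff_tendsto_slope.1 hre).mono_left
      (nhdsWithin_mono 1 (fun x (hx : x ∈ Set.Iio 1) => ne_of_lt hx))
    refine ge_of_tendsto hslope ?_
    filter_upwards [Ioo_mem_nhdsLT (zero_lt_one' ℝ)] with x hx
    have hnorm : ‖(x : ℂ)‖ = x := by simp [abs_of_pos hx.1]
    have hschwarz : ‖φ x‖ ≤ ‖(x : ℂ)‖ := norm_le_norm_of_mapsTo_ball hd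
      (fun z hz => by simpa using hle z (by simpa using (mem_ball_zero_iff.1 hz).le)) hφ0
      (by rw [hnorm]; exact hx.2)
    have hxre := (re_le_norm _).trans hschwarz
    rw [hnorm] at hxre
    have hneg : x - 1 < 0 := by linarith [hx.2]
    rw [slope_def_field, le_div_iff_of_neg hneg]
    simp only [ofReal_one, hφ1, one_re]
    linarith

/-- **Jack's lemma**. -/
theorem exists_mul_deriv_eq_of_norm_eq_one {ω : ℂ → ℂ} (hω : DifferentiableOn ℂ ω (ball 0 1))
    (hω0 : ω 0 = 0) {z₀ : ℂ} (hz₀ : z₀ ∈ ball (0 : ℂ) 1) (hnorm : ‖ω z₀‖ = 1)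
    (hle : ∀ z, ‖z‖ ≤ ‖z₀‖ → ‖ω z‖ ≤ 1) :
    ∃ k : ℝ, 1 ≤ k ∧ z₀ * deriv ω z₀ = k * ω z₀ := by
  have hne : ω z₀ ≠ 0 := norm_ne_zero_iff.1 (by simp [hnorm])
  have hz₀' : ‖z₀‖ < 1 := by simpa using hz₀
  have hderiv : HasDerivAt ω (deriv ω z₀) z₀ :=
    (hω.differentiableAt (isOpen_ball.mem_nhds hz₀)).hasDerivAt
  have hd : DifferentiableOn ℂ (fun z => ω (z * z₀) / ω z₀) (ball 0 1) := by
    refine (hω.comp (by fun_prop) fun z hz => ?_).div_const _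
    have hz' : ‖z‖ < 1 := by simpa using hz
    rw [mem_ball_zero_iff, norm_mul]
    nlinarith [norm_nonneg z, norm_nonneg z₀]
  have h1 : HasDerivAt (fun z => ω (z * z₀) / ω z₀) (deriv ω z₀ * z₀ / ω z₀) 1 := by
    refine (HasDerivAt.comp (h₂ := ω) (1 : ℂ) (by simpa using hderiv) ?_).div_const _
    simpa using (hasDerivAt_id (1 : ℂ)).mul_const z₀
  obtain ⟨him, hre⟩ := im_eq_zero_and_one_le_re_of_hasDerivAt_one hd h1 (by simp [hω0])
    (by simp [hne]) fun z hz => by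
      rw [norm_div, hnorm, div_one]
      refine hle _ ?_
      rw [norm_mul]
      nlinarith [norm_nonneg z₀]
  refine ⟨_, hre, ?_⟩
  have hk : (((deriv ω z₀ * z₀ / ω z₀).re : ℝ) : ℂ) = deriv ω z₀ * z₀ / ω z₀ :=
    Complex.ext rfl (by simp [him])
  rw [hk, div_mul_cancel₀ _ hne, mul_comm]

/-- A holomorphic function on the disk vanishing at `0` is bounded by `1` as soon as the conclusion
of Jack's lemma is impossible at points where its modulus is `1`. -/
theorem norm_lt_one_of_jack {ω : ℂ → ℂ} (hω : DifferentiableOn ℂ ω (ball 0 1)) (hω0 : ω 0 = 0)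
    (hjack : ∀ z ∈ ball (0 : ℂ) 1, ∀ k : ℝ, 1 ≤ k → ‖ω z‖ = 1 → z * deriv ω z ≠ k * ω z) :
    ∀ z ∈ ball (0 : ℂ) 1, ‖ω z‖ < 1 := by
  intro z₁ hz₁
  by_contra! hge
  have hz₁' : ‖z₁‖ < 1 := by simpa using hz₁
  have hsub : closedBall (0 : ℂ) ‖z₁‖ ⊆ ball 0 1 := closedBall_subset_ball hz₁'
  have hcont : ContinuousOn (fun z => ‖ω z‖) (closedBall 0 ‖z₁‖) :=
    (hω.continuousOn.mono hsub).norm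
  have hcompact : IsCompact (closedBall (0 : ℂ) ‖z₁‖ ∩ (fun z => ‖ω z‖) ⁻¹' Set.Ici 1) :=
    (isCompact_closedBall _ _).of_isClosed_subset
      (hcont.preimage_isClosed_of_isClosed isClosed_closedBall isClosed_Ici) Set.inter_subset_left
  obtain ⟨z₀, ⟨hz₀, hz₀ge⟩, hmin⟩ :=
    hcompact.exists_isMinOn ⟨z₁, by simp, hge⟩ continuous_norm.continuousOn
  have hz₀ge' : 1 ≤ ‖ω z₀‖ := hz₀ge
  have hz₀ne : z₀ ≠ 0 := by
    rintro rfl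
    norm_num [hω0] at hz₀ge'
  have hz₀le : ‖z₀‖ ≤ ‖z₁‖ := by simpa using hz₀
  have hsub₀ : closedBall (0 : ℂ) ‖z₀‖ ⊆ closedBall 0 ‖z₁‖ := closedBall_subset_closedBall hz₀le
  have hlt : ∀ z ∈ ball (0 : ℂ) ‖z₀‖, ‖ω z‖ ≤ 1 := by
    intro z hz
    by_contra! hgt
    have hle : ‖z₀‖ ≤ ‖z‖ := hmin ⟨hsub₀ (ball_subset_closedBall hz), hgt.le⟩
    exact absurd (mem_ball_zero_iff.1 hz) (not_lt.2 hle)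
  have hle : ∀ z, ‖z‖ ≤ ‖z₀‖ → ‖ω z‖ ≤ 1 := by
    intro z hz
    have hcl : closure (ball (0 : ℂ) ‖z₀‖) = closedBall 0 ‖z₀‖ :=
      closure_ball _ (norm_ne_zero_iff.2 hz₀ne)
    refine le_on_closure hlt (by rw [hcl]; exact hcont.mono hsub₀) continuousOn_const ?_
    rw [hcl]
    simpa using hz
  have hnorm : ‖ω z₀‖ = 1 := le_antisymm (hle z₀ le_rfl) hz₀ge'
  obtain ⟨k, hk, hkeq⟩ := exists_mul_deriv_eq_of_norm_eq_one hω hω0 (hsub hz₀) hnorm hle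
  exact hjack z₀ (hsub hz₀) k hk hnorm hkeq

theorem half_lt_re_inv_one_sub {w : ℂ} (hw : ‖w‖ < 1) : 1 / 2 < ((1 - w)⁻¹).re := by
  have hsq : w.re ^ 2 + w.im ^ 2 < 1 := by
    have := Complex.sq_norm w
    rw [normSq_apply] at this
    nlinarith [norm_nonneg w]
  have hre : w.re < 1 := (re_le_norm w).trans_lt hw
  have hpos : 0 < normSq (1 - w) := normSq_pos.2 fun h => by
    rw [← sub_eq_zero.1 h] at hre
    simp at hre
  rw [inv_re, lt_div_iff₀ hpos, normSq_apply]
  simp only [sub_re, one_re, sub_im, one_im]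
  nlinarith

theorem re_div_one_sub_of_norm_eq_one {w : ℂ} (hw : ‖w‖ = 1) (hne : w ≠ 1) :
    (w / (1 - w)).re = -1 / 2 := by
  have hsq : w.re ^ 2 + w.im ^ 2 = 1 := by
    have := Complex.sq_norm w
    rw [normSq_apply, hw] at this
    linarith
  have hpos : normSq (1 - w) ≠ 0 := fun h => hne (sub_eq_zero.1 (normSq_eq_zero.1 h)).symm
  rw [div_re, ← add_div, div_eq_iff hpos, normSq_apply]
  simp only [sub_re, one_re, sub_im, one_im]
  linear_combination (-1 / 2 : ℝ) * hsq

theorem re_inv_one_sub_of_norm_eq_one {w : ℂ} (hw : ‖w‖ = 1) (hne : w ≠ 1) :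
    ((1 - w)⁻¹).re = 1 / 2 := by
  have h : (1 - w)⁻¹ = 1 + w / (1 - w) := by
    have : 1 - w ≠ 0 := sub_ne_zero.2 hne.symm
    field_simp
    ring
  rw [h, add_re, re_div_one_sub_of_norm_eq_one hw hne]
  norm_num

theorem mem_slitPlane_sq {w : ℂ} (hw : 0 < w.re) : w ^ 2 ∈ slitPlane := by
  rw [mem_slitPlane_iff]
  by_cases him : w.im = 0
  · left
    simp only [sq, mul_re, him]
    nlinarith
  · right
    simp only [sq, mul_im]
    have : w.re * w.im ≠ 0 := mul_ne_zero hw.ne' him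
    contrapose! this
    linarith

theorem mul_deriv_dslope_zero {f : ℂ → ℂ} (hd : DifferentiableOn ℂ f (ball 0 1)) (hf0 : f 0 = 0)
    {z : ℂ} (hz : z ∈ ball (0 : ℂ) 1) :
    z * deriv (dslope f 0) z = deriv f z - dslope f 0 z := by
  have hF : DifferentiableOn ℂ (dslope f 0) (ball 0 1) :=
    (differentiableOn_dslope (ball_mem_nhds _ one_pos)).2 hd
  have hFz := (hF.differentiableAt (isOpen_ball.mem_nhds hz)).hasDerivAt
  have hfun : f = fun z => z * dslope f 0 z := by
    funext w
    simpa [hf0] using (sub_smul_dslope f 0 w).symm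
  have hderiv : deriv f z = dslope f 0 z + z * deriv (dslope f 0) z := by
    conv_lhs => rw [hfun]
    simpa using ((hasDerivAt_id z).fun_mul hFz).deriv
  rw [hderiv]
  ring

section Convex

variable {f : ℂ → ℂ}

/-- The Marx–Strohhäcker theorem, with `f z / z` replaced by its extension `dslope f 0`. -/
theorem Kclass.dslope_ne_zero_and_half_lt_re (hf : Kclass f) {z : ℂ} (hz : z ∈ ball (0 : ℂ) 1) :
    dslope f 0 z ≠ 0 ∧ 1 / 2 < (deriv f z / dslope f 0 z).re := by
  obtain ⟨⟨hd, hf0, hf1, hne⟩, hconv⟩ := hf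
  have hmem : ball (0 : ℂ) 1 ∈ nhds 0 := ball_mem_nhds _ one_pos
  have hF : DifferentiableOn ℂ (dslope f 0) (ball 0 1) := (differentiableOn_dslope hmem).2 hd
  have hd' : DifferentiableOn ℂ (deriv f) (ball 0 1) := hd.deriv isOpen_ball
  have key : ∀ z ∈ ball (0 : ℂ) 1, ‖1 - dslope f 0 z / deriv f z‖ < 1 := by
    refine norm_lt_one_of_jack ((differentiableOn_const 1).sub (hF.div hd' hne))
      (by simp [hf1]) ?_
    intro z hz k hk hnorm heq
    have hzn := isOpen_ball.mem_nhds hz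
    have hFz := (hF.differentiableAt hzn).hasDerivAt
    have hf'z := (hd'.differentiableAt hzn).hasDerivAt
    have hfz := mul_deriv_dslope_zero hd hf0 hz
    have hderiv := ((hFz.div hf'z (hne z hz)).const_sub 1).deriv
    have hne' := hne z hz
    have hω : z * deriv (fun z => 1 - dslope f 0 z / deriv f z) z =
        -1 + (dslope f 0 z / deriv f z) * (1 + z * deriv (deriv f) z / deriv f z) := by
      refine (congrArg (z * ·) hderiv).trans ?_
      field_simp
      linear_combination -(deriv f z) * hfz
    set w := 1 - dslope f 0 z / deriv f z with hw
    have hw' : dslope f 0 z / deriv f z = 1 - w := by rw [hw]; ring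
    rw [hω, hw'] at heq
    by_cases hw1 : w = 1
    · rw [hw1] at heq
      have := congrArg re heq
      simp at this
      linarith
    · have hw1' : 1 - w ≠ 0 := sub_ne_zero.2 (Ne.symm hw1)
      have hP : 1 + z * deriv (deriv f) z / deriv f z = (1 - w)⁻¹ + k * (w / (1 - w)) := by
        field_simp
        field_simp at heq
        linear_combination heq
      have := hconv z hz
      rw [hP, add_re, re_ofReal_mul, re_inv_one_sub_of_norm_eq_one hnorm hw1,
        re_div_one_sub_of_norm_eq_one hnorm hw1] at this
      linarith
  have hlt := key z hz
  constructor
  · intro h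
    simp [h] at hlt
  · simpa using half_lt_re_inv_one_sub hlt

theorem Kclass.dslope_mem_slitPlane (hf : Kclass f) {z : ℂ} (hz : z ∈ ball (0 : ℂ) 1) :
    dslope f 0 z ∈ slitPlane := by
  have hstar := fun z hz => hf.dslope_ne_zero_and_half_lt_re (z := z) hz
  obtain ⟨⟨hd, hf0, hf1, hne⟩, -⟩ := hf
  have hmem : ball (0 : ℂ) 1 ∈ nhds 0 := ball_mem_nhds _ one_pos
  have hF : DifferentiableOn ℂ (dslope f 0) (ball 0 1) := (differentiableOn_dslope hmem).2 hd
  have key : ∀ z ∈ ball (0 : ℂ) 1, ‖1 - (dslope f 0 z)⁻¹‖ < 1 := by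
    refine norm_lt_one_of_jack ((differentiableOn_const 1).sub (hF.inv fun z hz => (hstar z hz).1))
      (by simp [hf1]) ?_
    intro z hz k hk hnorm heq
    have hFz := (hF.differentiableAt (isOpen_ball.mem_nhds hz)).hasDerivAt
    have hfz := mul_deriv_dslope_zero hd hf0 hz
    obtain ⟨hne', hre⟩ := hstar z hz
    have hω : z * deriv (fun z => 1 - (dslope f 0 z)⁻¹) z =
        (dslope f 0 z)⁻¹ * (deriv f z / dslope f 0 z - 1) := by
      refine (congrArg (z * ·) ((hFz.fun_inv hne').const_sub 1).deriv).trans ?_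
      field_simp
      linear_combination hfz
    set w := 1 - (dslope f 0 z)⁻¹ with hw
    have hw' : (dslope f 0 z)⁻¹ = 1 - w := by rw [hw]; ring
    have hw1' : 1 - w ≠ 0 := hw' ▸ inv_ne_zero hne'
    have hw1 : w ≠ 1 := fun h => hw1' (by simp [h])
    rw [hω, hw'] at heq
    have hp : deriv f z / dslope f 0 z = 1 + k * (w / (1 - w)) := by
      rw [← mul_div_assoc, ← heq, mul_div_cancel_left₀ _ hw1']
      ring
    rw [hp, add_re, re_ofReal_mul, re_div_one_sub_of_norm_eq_one hnorm hw1, one_re] at hre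
    linarith
  have hre := half_lt_re_inv_one_sub (key z hz)
  rw [sub_sub_cancel, inv_inv] at hre
  exact mem_slitPlane_iff.2 (Or.inl (by linarith))

theorem Kclass.deriv_mem_slitPlane (hf : Kclass f) {z : ℂ} (hz : z ∈ ball (0 : ℂ) 1) :
    deriv f z ∈ slitPlane := by
  obtain ⟨⟨hd, -, hf1, hne⟩, hconv⟩ := hf
  have hd' : DifferentiableOn ℂ (deriv f) (ball 0 1) := hd.deriv isOpen_ball
  have hd'' : DifferentiableOn ℂ (deriv (deriv f)) (ball 0 1) := hd'.deriv isOpen_ball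
  have h0 : (0 : ℂ) ∈ ball (0 : ℂ) 1 := mem_ball_self one_pos
  obtain ⟨L, hL0, hL⟩ := (hd''.div hd' hne).isExactOn_ball.with_val_at 0 0
  have hu : ∀ z ∈ ball (0 : ℂ) 1, HasDerivAt (fun z => Complex.exp (-(L z / 2)))
      (Complex.exp (-(L z / 2)) * -(deriv (deriv f) z / deriv f z / 2)) z := fun z hz =>
    ((hL z hz).div_const 2).fun_neg.cexp
  have hprod : ∀ z ∈ ball (0 : ℂ) 1, HasDerivAt
      (fun z => deriv f z * Complex.exp (-(L z / 2)) ^ 2) 0 z := fun z hz => by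
    have hf'z := (hd'.differentiableAt (isOpen_ball.mem_nhds hz)).hasDerivAt
    refine (hf'z.fun_mul ((hu z hz).fun_pow 2)).congr_deriv ?_
    have := hne z hz
    field_simp
    ring
  have hone : ∀ z ∈ ball (0 : ℂ) 1, deriv f z * Complex.exp (-(L z / 2)) ^ 2 = 1 := fun z hz => by
    have := isOpen_ball.is_const_of_deriv_eq_zero (convex_ball (0 : ℂ) 1).isPreconnected
      (fun w hw => (hprod w hw).differentiableAt.differentiableWithinAt)
      (fun w hw => (hprod w hw).deriv) hz h0
    simpa [hL0, hf1] using this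
  have key : ∀ z ∈ ball (0 : ℂ) 1, ‖1 - Complex.exp (-(L z / 2))‖ < 1 := by
    refine norm_lt_one_of_jack
      (fun w hw => ((hu w hw).const_sub 1).differentiableAt.differentiableWithinAt)
      (by simp [hL0]) ?_
    intro z hz k hk hnorm heq
    rw [((hu z hz).const_sub 1).deriv] at heq
    have hexp := Complex.exp_ne_zero (-(L z / 2))
    set w := 1 - Complex.exp (-(L z / 2)) with hw
    have hw' : Complex.exp (-(L z / 2)) = 1 - w := by rw [hw]; ring
    rw [hw'] at heq hexp
    have hw1 : w ≠ 1 := fun h => hexp (by simp [h])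
    have hP : 1 + z * deriv (deriv f) z / deriv f z = 1 + (2 * k : ℝ) * (w / (1 - w)) := by
      rw [← mul_div_assoc, add_right_inj, eq_div_iff hexp]
      push_cast
      linear_combination 2 * heq
    have := hconv z hz
    rw [hP, add_re, re_ofReal_mul, re_div_one_sub_of_norm_eq_one hnorm hw1, one_re] at this
    linarith
  have hre := half_lt_re_inv_one_sub (key z hz)
  rw [sub_sub_cancel] at hre
  have hsq : deriv f z = (Complex.exp (-(L z / 2)))⁻¹ ^ 2 := by
    rw [inv_pow]
    exact eq_inv_of_mul_eq_one_left (hone z hz)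
  rw [hsq]
  exact mem_slitPlane_sq (by linarith)

end Convex

/-- The radial integral of a holomorphic function on the disk is a primitive of it. -/
theorem hasDerivAt_integral_radial {H : ℂ → ℂ} (hH : DifferentiableOn ℂ H (ball 0 1)) {z : ℂ}
    (hz : z ∈ ball (0 : ℂ) 1) :
    HasDerivAt (fun z => ∫ t in (0:ℝ)..1, H ((t : ℂ) * z) * z) (H z) z := by
  obtain ⟨P, hP0, hP⟩ := hH.isExactOn_ball.with_val_at 0 0
  refine (hP z hz).congr_of_eventuallyEq ?_
  filter_upwards [isOpen_ball.mem_nhds hz] with w hw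
  have hmem : ∀ t ∈ Set.uIcc (0 : ℝ) 1, (t : ℂ) * w ∈ ball (0 : ℂ) 1 := fun t ht => by
    rw [Set.uIcc_of_le zero_le_one] at ht
    rw [mem_ball_zero_iff] at hw ⊢
    rw [norm_mul, norm_real, Real.norm_of_nonneg ht.1]
    nlinarith [norm_nonneg w, ht.2]
  have hderiv : ∀ t ∈ Set.uIcc (0 : ℝ) 1,
      HasDerivAt (fun t : ℝ => P ((t : ℂ) * w)) (H ((t : ℂ) * w) * w) t := fun t ht => by
    refine HasDerivAt.comp_ofReal (e := fun s : ℂ => P (s * w)) ?_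
    refine HasDerivAt.comp (h₂ := P) _ (hP _ (hmem t ht)) ?_
    simpa using (hasDerivAt_id (t : ℂ)).mul_const w
  have hcont : ContinuousOn (fun t : ℝ => H ((t : ℂ) * w) * w) (Set.uIcc 0 1) :=
    (hH.continuousOn.comp (by fun_prop) hmem).mul continuousOn_const
  rw [intervalIntegral.integral_eq_sub_of_hasDerivAt hderiv hcont.intervalIntegrable]
  simp [hP0]

/-- for convex `f, g` and `α, β ≥ 0` with `α + 2β ≤ 2`, the operator
`C_{α,β}[f,g]` is convex. -/
theorem stmt_8 (f g : ℂ → ℂ) (hf : Kclass f) (hg : Kclass g)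
    (α β : ℝ) (hα : 0 ≤ α) (hβ : 0 ≤ β) (hsum : α + 2 * β ≤ 2)
    (C : ℂ → ℂ)
    (hC : ∀ z ∈ ball (0:ℂ) 1,
      C z = ∫ t in (0:ℝ)..1,
        (f ((t : ℂ) * z) / ((t : ℂ) * z)) ^ (α : ℂ)
          * (deriv g ((t : ℂ) * z)) ^ (β : ℂ) * z) :
    ∀ z ∈ ball (0:ℂ) 1, 0 < (1 + z * deriv (deriv C) z / deriv C z).re := by
  have hmem : ball (0 : ℂ) 1 ∈ nhds 0 := ball_mem_nhds _ one_pos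
  have hF : DifferentiableOn ℂ (dslope f 0) (ball 0 1) :=
    (differentiableOn_dslope hmem).2 hf.1.1
  have hg' : DifferentiableOn ℂ (deriv g) (ball 0 1) := hg.1.1.deriv isOpen_ball
  set H : ℂ → ℂ := fun z => dslope f 0 z ^ (α : ℂ) * deriv g z ^ (β : ℂ) with hHdef
  have hHderiv : ∀ z ∈ ball (0 : ℂ) 1, HasDerivAt H (H z *
      (α * (deriv (dslope f 0) z / dslope f 0 z) + β * (deriv (deriv g) z / deriv g z))) z := by
    intro z hz
    have hzn := isOpen_ball.mem_nhds hz
    have hFs := hf.dslope_mem_slitPlane hz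
    have hgs := hg.deriv_mem_slitPlane hz
    have hFne := slitPlane_ne_zero hFs
    have hgne := slitPlane_ne_zero hgs
    refine (((hF.differentiableAt hzn).hasDerivAt.cpow_const (c := (α : ℂ)) hFs).fun_mul
      ((hg'.differentiableAt hzn).hasDerivAt.cpow_const (c := (β : ℂ)) hgs)).congr_deriv ?_
    rw [hHdef, cpow_sub _ _ hFne, cpow_sub _ _ hgne, cpow_one, cpow_one]
    field_simp
  have hHd : DifferentiableOn ℂ H (ball 0 1) := fun z hz =>
    (hHderiv z hz).differentiableAt.differentiableWithinAt
  have hCH : Set.EqOn C (fun z => ∫ t in (0:ℝ)..1, H ((t : ℂ) * z) * z) (ball 0 1) := by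
    intro z hz
    rw [hC z hz]
    refine intervalIntegral.integral_congr_ae (Filter.Eventually.of_forall fun t ht => ?_)
    rcases eq_or_ne z 0 with rfl | hz0
    · simp
    rw [Set.uIoc_of_le zero_le_one] at ht
    have htz : (t : ℂ) * z ≠ 0 := mul_ne_zero (ofReal_ne_zero.2 ht.1.ne') hz0
    simp only [hHdef]
    rw [dslope_of_ne _ htz, slope_def_field, hf.1.2.1, sub_zero, sub_zero]
  have hC' : Set.EqOn (deriv C) H (ball 0 1) := fun z hz =>
    ((hasDerivAt_integral_radial hHd hz).congr_of_eventuallyEq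
      (hCH.eventuallyEq_of_mem (isOpen_ball.mem_nhds hz))).deriv
  intro z hz
  have hFne := slitPlane_ne_zero (hf.dslope_mem_slitPlane hz)
  have hgne := slitPlane_ne_zero (hg.deriv_mem_slitPlane hz)
  have hHne : H z ≠ 0 := mul_ne_zero (by simp [cpow_eq_zero_iff, hFne])
    (by simp [cpow_eq_zero_iff, hgne])
  have hC'' : deriv (deriv C) z = _ :=
    ((hHderiv z hz).congr_of_eventuallyEq
      (hC'.eventuallyEq_of_mem (isOpen_ball.mem_nhds hz))).deriv
  have hfz := mul_deriv_dslope_zero hf.1.1 hf.1.2.1 hz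
  have hid : 1 + z * deriv (deriv C) z / deriv C z =
      (α : ℝ) * (deriv f z / dslope f 0 z) +
        (β : ℝ) * (1 + z * deriv (deriv g) z / deriv g z) + (1 - α - β : ℝ) := by
    rw [hC'', hC' hz]
    push_cast
    field_simp
    linear_combination (α * deriv g z) * hfz
  have hfre := (hf.dslope_ne_zero_and_half_lt_re hz).2
  have hgre := hg.2 z hz
  rw [hid, add_re, add_re, re_ofReal_mul, re_ofReal_mul, ofReal_re]
  rcases hα.eq_or_lt with rfl | hα'
  · rcases hβ.eq_or_lt with rfl | hβ'
    · simp
    · nlinarith [mul_pos hβ' hgre]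
  · nlinarith [mul_nonneg hβ hgre.le, mul_lt_mul_of_pos_left hfre hα']
end

section
/- Let f ∈ 𝒢 and g ∈ 𝒦, and let β ≥ 0, α + β ≤ 1 when α ≥ 0, and 3β - α ≤ 3 when α < 0. Then Re(1 + z C_{α,β}[f,g]''(z)/C_{α,β}[f,g]'(z)) > 0 on the unit disk, i.e., C_{α,β}[f,g] is convex. -/
open Complex Metric

/-- A function which is continuous on the unit disk and leaves an open set `U` has a first
exit point, measured by the distance to the origin. -/
lemma exists_first_exit {p : ℂ → ℂ} {U : Set ℂ} (hU : IsOpen U)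
    (hp : ContinuousOn p (ball 0 1)) {z : ℂ} (hz : z ∈ ball (0 : ℂ) 1) (hpz : p z ∉ U) :
    ∃ z₀ ∈ ball (0 : ℂ) 1, p z₀ ∉ U ∧ ∀ w, ‖w‖ < ‖z₀‖ → p w ∈ U := by
  rw [mem_ball_zero_iff] at hz
  have hsub : closedBall (0 : ℂ) ‖z‖ ⊆ ball 0 1 := closedBall_subset_ball hz
  have hclosed : IsClosed (closedBall (0 : ℂ) ‖z‖ ∩ p ⁻¹' Uᶜ) :=
    (hp.mono hsub).preimage_isClosed_of_isClosed isClosed_closedBall hU.isClosed_compl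
  have hcomp : IsCompact (closedBall (0 : ℂ) ‖z‖ ∩ p ⁻¹' Uᶜ) :=
    (isCompact_closedBall _ _).of_isClosed_subset hclosed Set.inter_subset_left
  obtain ⟨z₀, ⟨hz₀, hpz₀⟩, hmin⟩ :=
    hcomp.exists_isMinOn ⟨z, by simp, hpz⟩ continuous_norm.continuousOn
  refine ⟨z₀, hsub hz₀, hpz₀, fun w hw => ?_⟩
  by_contra hpw
  have hw' : w ∈ closedBall (0 : ℂ) ‖z‖ := by
    rw [mem_closedBall_zero_iff] at hz₀ ⊢
    exact hw.le.trans hz₀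
  exact absurd (hmin ⟨hw', hpw⟩) (by simpa using hw)

/-- At a first exit point the function lies in the closure of the open set. -/
lemma mem_closure_of_first_exit {p : ℂ → ℂ} {U : Set ℂ} {z₀ : ℂ} (h₀ : z₀ ≠ 0)
    (h : ∀ w, ‖w‖ < ‖z₀‖ → p w ∈ U) {w : ℂ} (hp : ContinuousAt p w) (hw : ‖w‖ ≤ ‖z₀‖) :
    p w ∈ closure U := by
  have hcl : w ∈ closure (ball (0 : ℂ) ‖z₀‖) := by
    rw [closure_ball _ (by simpa using h₀)]
    simpa using hw
  exact closure_mono (Set.image_subset_iff.2 fun v hv => h v (by simpa using hv))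
    (hp.continuousWithinAt.mem_closure_image hcl)

/-- A real function which is nonnegative to the right of `0` and vanishes at `0` has a
nonnegative derivative there. -/
lemma HasDerivAt.nonneg_of_nonneg_right {χ : ℝ → ℝ} {χ' : ℝ} (h : HasDerivAt χ χ' 0)
    (h0 : χ 0 = 0) (hχ : ∀ s, 0 < s → 0 ≤ χ s) : 0 ≤ χ' := by
  refine ge_of_tendsto h.tendsto_slope_zero_right ?_
  filter_upwards [self_mem_nhdsWithin] with s hs
  have hs : 0 < s := hs
  have := hχ s hs
  simp only [zero_add, h0, sub_zero, smul_eq_mul]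
  positivity

/-- **Jack's lemma**. -/
lemma exists_one_le_mul_deriv_eq {ω : ℂ → ℂ} {z₀ : ℂ}
    (hd : ∀ z, ‖z‖ ≤ ‖z₀‖ → DifferentiableAt ℂ ω z) (h0 : ω 0 = 0)
    (hle : ∀ z, ‖z‖ ≤ ‖z₀‖ → ‖ω z‖ ≤ 1) (h1 : ‖ω z₀‖ = 1) :
    ∃ k : ℝ, 1 ≤ k ∧ z₀ * deriv ω z₀ = k * ω z₀ := by
  have hz₀ : z₀ ≠ 0 := by
    rintro rfl
    simp [h0] at h1
  have hr : 0 < ‖z₀‖ := norm_pos_iff.2 hz₀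
  have hschwarz : ∀ z, ‖z‖ ≤ ‖z₀‖ → ‖ω z‖ ≤ ‖z‖ / ‖z₀‖ := by
    intro z hz
    rcases hz.eq_or_lt with h | h
    · rw [h, div_self hr.ne']
      exact hle z hz
    · have := dist_le_div_mul_dist_of_mapsTo_ball (f := ω) (c := 0) (R₁ := ‖z₀‖) (R₂ := 1)
        (fun w hw => (hd w (by simpa using (mem_ball_zero_iff.1 hw).le)).differentiableWithinAt)
        (fun w hw => by simpa [h0] using hle w (mem_ball_zero_iff.1 hw).le)
        (mem_ball_zero_iff.2 h)
      simpa [h0, div_eq_inv_mul] using this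
  have key : ∀ c : ℂ, c.re ≤ 0 →
      0 ≤ 2 * c.re - 2 * ((starRingEnd ℂ) (ω z₀) * (z₀ * deriv ω z₀) * c).re := by
    intro c hc
    have hγ : HasDerivAt (fun s : ℝ => z₀ * exp (c * s)) (z₀ * c) 0 := by
      have h := (((hasDerivAt_id (0 : ℝ)).ofReal_comp.const_mul c).cexp).const_mul z₀
      simpa using h
    have hω : HasDerivAt (fun s : ℝ => ω (z₀ * exp (c * s))) (deriv ω z₀ * (z₀ * c)) 0 := by
      refine HasDerivAt.comp (h₂ := ω) (0 : ℝ) ?_ hγ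
      simpa using (hd z₀ le_rfl).hasDerivAt
    have hsq := hω.norm_sq
    have hexp : HasDerivAt (fun s : ℝ => Real.exp (2 * c.re * s)) (2 * c.re) 0 := by
      simpa using ((hasDerivAt_id (0 : ℝ)).const_mul (2 * c.re)).exp
    have hχ := (hexp.sub hsq).nonneg_of_nonneg_right (by simp [h1]) (fun s hs => by
      have hn : ‖z₀ * exp (c * s)‖ = ‖z₀‖ * Real.exp (c.re * s) := by
        simp [norm_exp]
      have h1 : Real.exp (c.re * s) ≤ 1 := Real.exp_le_one_iff.2 (by nlinarith)
      have h2 := hschwarz (z₀ * exp (c * s)) (by rw [hn]; nlinarith)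
      rw [hn, mul_div_cancel_left₀ _ hr.ne'] at h2
      have h3 : Real.exp (2 * c.re * s) = Real.exp (c.re * s) ^ 2 := by
        rw [← Real.exp_nat_mul]
        congr 1
        push_cast
        ring
      simp only [Pi.sub_apply, h3, sub_nonneg]
      gcongr)
    convert hχ using 2
    simp [Complex.inner]
    ring
  set A := (starRingEnd ℂ) (ω z₀) * (z₀ * deriv ω z₀) with hA
  have e1 := key (-1) (by simp)
  have e2 := key I (by simp)
  have e3 := key (-I) (by simp)
  simp at e1 e2 e3
  refine ⟨A.re, by linarith, ?_⟩
  have hAre : (A.re : ℂ) = A := Complex.ext (by simp) (by simp; linarith)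
  rw [hAre, hA, mul_right_comm, mul_comm _ (ω z₀), mul_conj, normSq_eq_norm_sq, h1]
  simp

/-- A zero-free function `v` on the disk with `v 0 = 1` and `Re (z v'/v) < 1/2` stays within
distance one of `1`. -/
lemma mem_ball_one_of_logDeriv_re_lt {v : ℂ → ℂ} (hv : DifferentiableOn ℂ v (ball 0 1))
    (h0 : v 0 = 1) (hne : ∀ z ∈ ball (0 : ℂ) 1, v z ≠ 0)
    (hre : ∀ z ∈ ball (0 : ℂ) 1, (z * deriv v z / v z).re < 1 / 2) :
    ∀ z ∈ ball (0 : ℂ) 1, v z ∈ ball (1 : ℂ) 1 := by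
  by_contra! ⟨z, hz, hvz⟩
  obtain ⟨z₀, hz₀, hex, hin⟩ := exists_first_exit isOpen_ball hv.continuousOn hz hvz
  have hz₀0 : z₀ ≠ 0 := by
    rintro rfl
    simp [h0] at hex
  have hmem : ∀ w, ‖w‖ ≤ ‖z₀‖ → w ∈ ball (0 : ℂ) 1 := fun w hw =>
    mem_ball_zero_iff.2 (hw.trans_lt (mem_ball_zero_iff.1 hz₀))
  have hdiff : ∀ w ∈ ball (0 : ℂ) 1, DifferentiableAt ℂ v w := fun w hw =>
    hv.differentiableAt (isOpen_ball.mem_nhds hw)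
  have hcl : ∀ w, ‖w‖ ≤ ‖z₀‖ → ‖1 - v w‖ ≤ 1 := by
    intro w hw
    have := mem_closure_of_first_exit hz₀0 hin (hdiff w (hmem w hw)).continuousAt hw
    rw [closure_ball _ one_ne_zero, mem_closedBall, dist_comm, dist_eq_norm] at this
    exact this
  have hone : ‖1 - v z₀‖ = 1 := by
    refine le_antisymm (hcl z₀ le_rfl) ?_
    rw [mem_ball, dist_comm, dist_eq_norm, not_lt] at hex
    exact hex
  obtain ⟨k, hk, hjack⟩ := exists_one_le_mul_deriv_eq (ω := fun w => 1 - v w)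
    (fun w hw => (hdiff w (hmem w hw)).const_sub 1) (by simp [h0]) hcl hone
  have hd : deriv (fun w => 1 - v w) z₀ = -deriv v z₀ := by simp
  rw [hd] at hjack
  have hr := hre z₀ hz₀
  have hvne := hne z₀ hz₀
  have hq : z₀ * deriv v z₀ / v z₀ = k * (1 - (v z₀)⁻¹) := by
    field_simp
    linear_combination -hjack
  rw [hq] at hr
  have hns : normSq (v z₀) = 2 * (v z₀).re := by
    have h := normSq_eq_norm_sq (1 - v z₀)
    rw [hone, normSq_apply] at h
    simp at h
    rw [normSq_apply]
    linarith
  have hpos : 0 < normSq (v z₀) := normSq_pos.2 hvne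
  have : ((v z₀)⁻¹).re = 1 / 2 := by
    rw [inv_re, hns]
    field_simp
    rw [div_self (by linarith)]
  rw [re_ofReal_mul, sub_re, this, one_re] at hr
  linarith

lemma re_pos_of_mem_ball_one {w : ℂ} (hw : w ∈ ball (1 : ℂ) 1) : 0 < w.re := by
  rw [mem_ball, dist_eq_norm] at hw
  have := (abs_re_le_norm (w - 1)).trans_lt hw
  rw [abs_lt] at this
  simp at this
  linarith

/-- If `Re (z q'/q) > -1` on the disk and `q 0 = 1`, then `q` omits the nonpositive reals. -/
lemma mem_slitPlane_of_neg_one_lt_logDeriv {q : ℂ → ℂ} (hq : DifferentiableOn ℂ q (ball 0 1))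
    (h0 : q 0 = 1) (hne : ∀ z ∈ ball (0 : ℂ) 1, q z ≠ 0)
    (hre : ∀ z ∈ ball (0 : ℂ) 1, -1 < (z * deriv q z / q z).re) :
    ∀ z ∈ ball (0 : ℂ) 1, q z ∈ slitPlane := by
  obtain ⟨G, hG0, hG⟩ := ((hq.deriv isOpen_ball).div hq hne).isExactOn_ball.with_val_at 0 0
  have hdiff : ∀ w ∈ ball (0 : ℂ) 1, HasDerivAt q (deriv q w) w := fun w hw =>
    (hq.differentiableAt (isOpen_ball.mem_nhds hw)).hasDerivAt
  have hqG : ∀ z ∈ ball (0 : ℂ) 1, q z * exp (-G z) = 1 := by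
    intro z hz
    have hd : ∀ w ∈ ball (0 : ℂ) 1, HasDerivAt (fun x => q x * exp (-G x)) 0 w := by
      intro w hw
      refine ((hdiff w hw).mul (hG w hw).neg.cexp).congr_deriv ?_
      have := hne w hw
      simp only [Pi.div_apply]
      field_simp
      ring
    have := (convex_ball (0 : ℂ) 1).is_const_of_fderivWithin_eq_zero (𝕜 := ℂ)
      (fun w hw => (hd w hw).differentiableAt.differentiableWithinAt) (fun w hw => by
        rw [fderivWithin_of_isOpen isOpen_ball hw]
        ext
        simp [(hd w hw).deriv]) hz (mem_ball_self one_pos)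
    simpa [h0, hG0] using this
  have hv : ∀ w ∈ ball (0 : ℂ) 1, HasDerivAt (fun x => exp (-G x / 2))
      (exp (-G w / 2) * (-(deriv q w / q w) / 2)) w := fun w hw =>
    ((hG w hw).neg.div_const 2).cexp
  intro z hz
  have hmem := mem_ball_one_of_logDeriv_re_lt (v := fun x => exp (-G x / 2))
    (fun w hw => (hv w hw).differentiableAt.differentiableWithinAt) (by simp [hG0])
    (fun w _ => exp_ne_zero _) (fun w hw => by
      have he : w * deriv (fun x => exp (-G x / 2)) w / exp (-G w / 2)
          = ((-1 / 2 : ℝ) : ℂ) * (w * deriv q w / q w) := by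
        rw [(hv w hw).deriv]
        have := exp_ne_zero (-G w / 2)
        have := hne w hw
        push_cast
        field_simp
      rw [he, re_ofReal_mul]
      linarith [hre w hw]) z hz
  have hpos := re_pos_of_mem_ball_one hmem
  set v := exp (-G z / 2)
  have hv2 : q z * v ^ 2 = 1 := by
    rw [← hqG z hz, ← exp_nat_mul]
    congr 2
    push_cast
    ring
  by_contra hns
  rw [mem_slitPlane_iff] at hns
  push Not at hns
  obtain ⟨hre', him'⟩ := hns
  have e1 := congrArg re hv2
  have e2 := congrArg im hv2
  simp [him', pow_two] at e1 e2
  have hq0 : (q z).re ≠ 0 := fun h => hne z hz (Complex.ext h him')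
  have hvi : v.im = 0 := by
    have : v.re * v.im = 0 := by
      rcases e2 with h | h
      · exact absurd h hq0
      · linarith
    exact (mul_eq_zero.1 this).resolve_left hpos.ne'
  rw [hvi] at e1
  nlinarith [mul_pos hpos hpos]

section DslopeZero

variable {f : ℂ → ℂ}

lemma hasDerivAt_dslope_zero (hf : DifferentiableOn ℂ f (ball 0 1)) {z : ℂ}
    (hz : z ∈ ball (0 : ℂ) 1) : HasDerivAt (dslope f 0) (deriv (dslope f 0) z) z :=
  (((differentiableOn_dslope (ball_mem_nhds 0 one_pos)).2 hf).differentiableAt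
    (isOpen_ball.mem_nhds hz)).hasDerivAt

lemma mul_dslope_zero (h0 : f 0 = 0) (z : ℂ) : z * dslope f 0 z = f z := by
  simpa [h0] using sub_smul_dslope f 0 z

lemma dslope_zero_add_mul_deriv (hf : DifferentiableOn ℂ f (ball 0 1)) (h0 : f 0 = 0) {z : ℂ}
    (hz : z ∈ ball (0 : ℂ) 1) : dslope f 0 z + z * deriv (dslope f 0) z = deriv f z := by
  have h := (hasDerivAt_id z).mul (hasDerivAt_dslope_zero hf hz)
  have he : (id * dslope f 0) = f := funext fun w => mul_dslope_zero h0 w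
  rw [he] at h
  simpa using h.deriv.symm

lemma ofReal_mul_mem_ball_zero {z : ℂ} {r : ℝ} (hz : z ∈ ball (0 : ℂ) r) :
    ∀ t ∈ Set.uIcc (0 : ℝ) 1, (t : ℂ) * z ∈ ball (0 : ℂ) r := by
  intro t ht
  rw [Set.uIcc_of_le zero_le_one] at ht
  rw [mem_ball_zero_iff] at hz ⊢
  rw [norm_mul, norm_real, Real.norm_of_nonneg ht.1]
  nlinarith [ht.2, norm_nonneg z]

/-- If `H` is a primitive of `h` on the unit disk, integrating `h` along the radius of `z`
recovers the increment of `H`. -/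
lemma integral_radius_eq_sub {h H : ℂ → ℂ} (hc : ContinuousOn h (ball 0 1))
    (hH : ∀ z ∈ ball (0 : ℂ) 1, HasDerivAt H (h z) z) {z : ℂ} (hz : z ∈ ball (0 : ℂ) 1) :
    ∫ t in (0 : ℝ)..1, h (t * z) * z = H z - H 0 := by
  have hmem := ofReal_mul_mem_ball_zero hz
  have hcont : Continuous fun t : ℝ => (t : ℂ) * z := by fun_prop
  rw [intervalIntegral.integral_eq_sub_of_hasDerivAt (f := fun t : ℝ => H (t * z))]
  · simp
  · intro t ht
    have h1 : HasDerivAt (fun t : ℝ => (t : ℂ) * z) z t := by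
      simpa using (hasDerivAt_id t).ofReal_comp.mul_const z
    exact HasDerivAt.comp (h₂ := H) t (hH _ (hmem t ht)) h1
  · exact ((hc.comp hcont.continuousOn hmem).mul continuousOn_const).intervalIntegrable

/-- If `Re f' > 0` on the unit disk and `f 0 = 0`, then `Re (f z / z) > 0`. -/
lemma dslope_zero_re_pos (hf : DifferentiableOn ℂ f (ball 0 1)) (h0 : f 0 = 0)
    (hre : ∀ z ∈ ball (0 : ℂ) 1, 0 < (deriv f z).re) {z : ℂ} (hz : z ∈ ball (0 : ℂ) 1) :
    0 < (dslope f 0 z).re := by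
  rcases eq_or_ne z 0 with rfl | hz0
  · simpa using hre 0 hz
  have hc := (hf.deriv isOpen_ball).continuousOn
  have hint := integral_radius_eq_sub hc
    (fun w hw => (hf.differentiableAt (isOpen_ball.mem_nhds hw)).hasDerivAt) hz
  rw [intervalIntegral.integral_mul_const, h0, sub_zero, ← mul_dslope_zero h0 z, mul_comm] at hint
  rw [← mul_left_cancel₀ hz0 hint]
  have hmem := ofReal_mul_mem_ball_zero hz
  have hcont : Continuous fun t : ℝ => (t : ℂ) * z := by fun_prop
  have hci : ContinuousOn (fun t : ℝ => deriv f (t * z)) (Set.uIcc 0 1) :=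
    hc.comp hcont.continuousOn hmem
  have := reCLM.intervalIntegral_comp_comm (hci.intervalIntegrable (μ := MeasureTheory.volume))
  simp only [reCLM_apply] at this
  rw [← this]
  refine intervalIntegral.intervalIntegral_pos_of_pos_on
    (continuous_re.comp_continuousOn hci).intervalIntegrable (fun t ht => ?_) one_pos
  refine hre _ (hmem t ?_)
  rw [Set.uIcc_of_le zero_le_one]
  exact Set.Ioo_subset_Icc_self ht

end DslopeZero

lemma Fclass.deriv_differentiableOn {f : ℂ → ℂ} (hf : Fclass f) :
    DifferentiableOn ℂ (deriv f) (ball 0 1) :=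
  hf.1.deriv isOpen_ball

/-- Members of `𝒢` have a derivative with positive real part. -/
lemma Fclass.deriv_re_pos {f : ℂ → ℂ} (hf : Fclass f)
    (hfG : ∀ z ∈ ball (0 : ℂ) 1, (1 + z * deriv (deriv f) z / deriv f z).re < 3 / 2) :
    ∀ z ∈ ball (0 : ℂ) 1, 0 < (deriv f z).re := fun z hz =>
  re_pos_of_mem_ball_one <|
    mem_ball_one_of_logDeriv_re_lt hf.deriv_differentiableOn hf.2.2.1 hf.2.2.2
      (fun w hw => by
        have := hfG w hw
        rw [add_re, one_re] at this
        linarith) z hz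

lemma norm_two_mul_one_sub_div_two_sub {p : ℂ} (hp : p ∈ closedBall (2 / 3 : ℂ) (2 / 3)) :
    p ≠ 2 ∧ ‖2 * (1 - p) / (2 - p)‖ ≤ 1 ∧
      (2 / 3 ≤ ‖p - 2 / 3‖ → 3 * normSq p = 4 * p.re ∧ ‖2 * (1 - p) / (2 - p)‖ = 1) := by
  rw [mem_closedBall, dist_eq_norm] at hp
  have hn := normSq_eq_norm_sq (p - 2 / 3)
  have h23 : (2 / 3 : ℂ) = ((2 / 3 : ℝ) : ℂ) := by push_cast; rfl
  have hns : normSq (p - 2 / 3) = normSq p - 4 / 3 * p.re + 4 / 9 := by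
    rw [h23, normSq_apply, normSq_apply, sub_re, sub_im, ofReal_re, ofReal_im]
    ring
  have hle : 3 * normSq p ≤ 4 * p.re := by
    nlinarith [norm_nonneg (p - 2 / 3)]
  have h2 : p ≠ 2 := by
    rintro rfl
    norm_num [normSq_apply] at hle
  have hpos : 0 < ‖2 - p‖ := norm_pos_iff.2 (sub_ne_zero.2 h2.symm)
  have ha : ‖2 * (1 - p)‖ ^ 2 = 4 * (1 - 2 * p.re + normSq p) := by
    rw [← normSq_eq_norm_sq, normSq_apply, normSq_apply]
    simp
    ring
  have hb : ‖2 - p‖ ^ 2 = 4 - 4 * p.re + normSq p := by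
    rw [← normSq_eq_norm_sq, normSq_apply, normSq_apply]
    simp
    ring
  refine ⟨h2, ?_, fun hge => ?_⟩
  · rw [norm_div, div_le_one hpos]
    refine le_of_sq_le_sq ?_ hpos.le
    linarith
  · have heq : 3 * normSq p = 4 * p.re := by
      nlinarith [norm_nonneg (p - 2 / 3)]
    refine ⟨heq, ?_⟩
    rw [norm_div, div_eq_one_iff_eq hpos.ne']
    refine (sq_eq_sq₀ (norm_nonneg _) hpos.le).1 ?_
    linarith

/-- Members of `𝒢` satisfy `|z f'/f - 2/3| < 2/3`, written with `f / z` extended over `0`. -/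
lemma Fclass.mem_ball_two_thirds {f : ℂ → ℂ} (hf : Fclass f)
    (hfG : ∀ z ∈ ball (0 : ℂ) 1, (1 + z * deriv (deriv f) z / deriv f z).re < 3 / 2) :
    ∀ z ∈ ball (0 : ℂ) 1, deriv f z / dslope f 0 z ∈ ball (2 / 3 : ℂ) (2 / 3) := by
  have hF : ∀ w ∈ ball (0 : ℂ) 1, dslope f 0 w ≠ 0 := fun w hw h => by
    have := dslope_zero_re_pos hf.1 hf.2.1 (hf.deriv_re_pos hfG) hw
    simp [h] at this
  have hp : ∀ w ∈ ball (0 : ℂ) 1, HasDerivAt (fun z => deriv f z / dslope f 0 z)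
      ((deriv (deriv f) w * dslope f 0 w - deriv f w * deriv (dslope f 0) w) /
        dslope f 0 w ^ 2) w := fun w hw =>
    (hf.deriv_differentiableOn.differentiableAt (isOpen_ball.mem_nhds hw)).hasDerivAt.div
      (hasDerivAt_dslope_zero hf.1 hw) (hF w hw)
  by_contra! ⟨z, hz, hpz⟩
  obtain ⟨z₀, hz₀, hex, hin⟩ := exists_first_exit
    (p := fun z => deriv f z / dslope f 0 z) isOpen_ball
    (fun w hw => (hp w hw).continuousAt.continuousWithinAt) hz hpz
  have hp₀ := hp z₀ hz₀
  have hid := dslope_zero_add_mul_deriv hf.1 hf.2.1 hz₀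
  have hp0 : (fun z => deriv f z / dslope f 0 z) 0 = 1 := by
    simp [hf.2.2.1]
  have hne := hf.2.2.2 z₀ hz₀
  have hF₀ := hF z₀ hz₀
  have hG := hfG z₀ hz₀
  set p : ℂ → ℂ := fun z => deriv f z / dslope f 0 z with hpdef
  have hlog : 1 + z₀ * deriv (deriv f) z₀ / deriv f z₀ = p z₀ + z₀ * deriv p z₀ / p z₀ := by
    rw [hp₀.deriv, hpdef]
    field_simp
    linear_combination deriv f z₀ * hid
  have hpne : p z₀ ≠ 0 := div_ne_zero hne hF₀
  rw [hlog] at hG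
  have hz₀0 : z₀ ≠ 0 := by
    rintro rfl
    change p 0 ∉ _ at hex
    rw [hp0] at hex
    norm_num [dist_eq_norm] at hex
  have hmem : ∀ w, ‖w‖ ≤ ‖z₀‖ → w ∈ ball (0 : ℂ) 1 := fun w hw =>
    mem_ball_zero_iff.2 (hw.trans_lt (mem_ball_zero_iff.1 hz₀))
  have hcl : ∀ w, ‖w‖ ≤ ‖z₀‖ → p w ∈ closedBall (2 / 3 : ℂ) (2 / 3) := by
    intro w hw
    have := mem_closure_of_first_exit hz₀0 hin (hp w (hmem w hw)).continuousAt hw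
    rwa [closure_ball _ (by norm_num)] at this
  obtain ⟨hp2, -, hbd⟩ := norm_two_mul_one_sub_div_two_sub (hcl z₀ le_rfl)
  rw [mem_ball, dist_eq_norm, not_lt] at hex
  obtain ⟨hcirc, hone⟩ := hbd hex
  have h2p : 2 - p z₀ ≠ 0 := sub_ne_zero.2 hp2.symm
  obtain ⟨k, hk, hjack⟩ := exists_one_le_mul_deriv_eq
    (ω := fun w => 2 * (1 - p w) / (2 - p w))
    (fun w hw => (((hp w (hmem w hw)).differentiableAt.const_sub 1).const_mul 2).div
      ((hp w (hmem w hw)).differentiableAt.const_sub 2)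
      (sub_ne_zero.2 (norm_two_mul_one_sub_div_two_sub (hcl w hw)).1.symm))
    (by simp [hp0]) (fun w hw => (norm_two_mul_one_sub_div_two_sub (hcl w hw)).2.1) hone
  have hω : deriv (fun w => 2 * (1 - p w) / (2 - p w)) z₀ = -2 * deriv p z₀ / (2 - p z₀) ^ 2 := by
    have hd := hp₀.differentiableAt.hasDerivAt
    have := ((hd.const_sub 1).const_mul 2).div (hd.const_sub 2) h2p
    refine this.deriv.trans ?_
    congr 1
    ring
  rw [hω] at hjack
  have hq : z₀ * deriv p z₀ / p z₀ = k * (3 - p z₀ - 2 * (p z₀)⁻¹) := by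
    field_simp at hjack ⊢
    linear_combination (-1 : ℂ) * hjack
  have hpos : 0 < normSq (p z₀) := normSq_pos.2 hpne
  have hinv : ((p z₀)⁻¹).re = 3 / 4 := by
    rw [inv_re, div_eq_iff hpos.ne']
    linarith
  have hle : (p z₀).re ≤ 4 / 3 := by
    have := normSq_apply (p z₀)
    nlinarith [mul_self_nonneg (p z₀).im]
  have hre2 : (2 * (p z₀)⁻¹).re = 3 / 2 := by
    rw [show (2 : ℂ) = ((2 : ℝ) : ℂ) by norm_num, re_ofReal_mul, hinv]
    norm_num
  rw [hq, add_re, re_ofReal_mul, sub_re, sub_re, hre2] at hG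
  norm_num at hG
  nlinarith

/-- Logarithmic form of the derivative of `F ^ a * G ^ b`. -/
lemma hasDerivAt_cpow_mul_cpow {F G : ℂ → ℂ} {F' G' z a b : ℂ} (hF : HasDerivAt F F' z)
    (hG : HasDerivAt G G' z) (hFs : F z ∈ slitPlane) (hGs : G z ∈ slitPlane) :
    HasDerivAt (fun w => F w ^ a * G w ^ b)
      (F z ^ a * G z ^ b * (a * F' / F z + b * G' / G z)) z := by
  refine ((hF.cpow_const hFs).mul (hG.cpow_const hGs)).congr_deriv ?_
  have := slitPlane_ne_zero hFs
  have := slitPlane_ne_zero hGs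
  rw [cpow_sub _ _ ‹F z ≠ 0›, cpow_sub _ _ ‹G z ≠ 0›]
  simp only [cpow_one]
  field_simp

/-- for `f ∈ 𝒢`, `g ∈ 𝒦`, `β ≥ 0`, with `α + β ≤ 1` when `α ≥ 0` and
`3β - α ≤ 3` when `α < 0`, the operator `C_{α,β}[f,g]` is convex. -/
theorem stmt_16 (f g : ℂ → ℂ) (hf : Fclass f)
    (hfG : ∀ z ∈ ball (0:ℂ) 1,
      (1 + z * deriv (deriv f) z / deriv f z).re < 3 / 2)
    (hg : Kclass g)
    (α β : ℝ) (hβ : 0 ≤ β)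
    (h1 : 0 ≤ α → α + β ≤ 1) (h2 : α < 0 → 3 * β - α ≤ 3)
    (C : ℂ → ℂ)
    (hC : ∀ z ∈ ball (0:ℂ) 1,
      C z = ∫ t in (0:ℝ)..1,
        (f ((t : ℂ) * z) / ((t : ℂ) * z)) ^ (α : ℂ)
          * (deriv g ((t : ℂ) * z)) ^ (β : ℂ) * z) :
    ∀ z ∈ ball (0:ℂ) 1, 0 < (1 + z * deriv (deriv C) z / deriv C z).re := by
  have hp := hf.mem_ball_two_thirds hfG
  have hFre := fun z hz => dslope_zero_re_pos hf.1 hf.2.1 (hf.deriv_re_pos hfG) (z := z) hz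
  have hFs : ∀ z ∈ ball (0 : ℂ) 1, dslope f 0 z ∈ slitPlane := fun z hz => Or.inl (hFre z hz)
  have hgs : ∀ z ∈ ball (0 : ℂ) 1, deriv g z ∈ slitPlane :=
    mem_slitPlane_of_neg_one_lt_logDeriv hg.1.deriv_differentiableOn hg.1.2.2.1 hg.1.2.2.2
      fun z hz => by
        have := hg.2 z hz
        rw [add_re, one_re] at this
        linarith
  set h : ℂ → ℂ := fun w => dslope f 0 w ^ (α : ℂ) * deriv g w ^ (β : ℂ) with hh
  have hhd : ∀ z ∈ ball (0 : ℂ) 1, HasDerivAt h (h z * (α * deriv (dslope f 0) z / dslope f 0 z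
      + β * deriv (deriv g) z / deriv g z)) z := fun z hz =>
    hasDerivAt_cpow_mul_cpow (hasDerivAt_dslope_zero hf.1 hz)
      (hg.1.deriv_differentiableOn.differentiableAt (isOpen_ball.mem_nhds hz)).hasDerivAt
      (hFs z hz) (hgs z hz)
  have hdiff : DifferentiableOn ℂ h (ball 0 1) := fun z hz =>
    (hhd z hz).differentiableAt.differentiableWithinAt
  obtain ⟨H, -, hH⟩ := hdiff.isExactOn_ball.with_val_at 0 0
  have hCH : ∀ z ∈ ball (0 : ℂ) 1, C z = H z - H 0 := by
    intro z hz
    rw [hC z hz, ← integral_radius_eq_sub hdiff.continuousOn hH hz]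
    refine intervalIntegral.integral_congr_ae (Filter.Eventually.of_forall fun t ht => ?_)
    rw [Set.uIoc_of_le zero_le_one] at ht
    rcases eq_or_ne z 0 with rfl | hz0
    · simp
    · have htz : (t : ℂ) * z ≠ 0 := mul_ne_zero (ofReal_ne_zero.2 ht.1.ne') hz0
      rw [hh]
      simp only
      rw [← mul_dslope_zero hf.2.1 ((t : ℂ) * z), mul_div_cancel_left₀ _ htz]
  have hC' : ∀ z ∈ ball (0 : ℂ) 1, deriv C z = h z := by
    intro z hz
    have : C =ᶠ[nhds z] fun w => H w - H 0 :=
      Filter.eventuallyEq_of_mem (isOpen_ball.mem_nhds hz) hCH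
    rw [this.deriv_eq]
    exact ((hH z hz).sub_const _).deriv
  intro z hz
  have hC'' : deriv (deriv C) z = h z * (α * deriv (dslope f 0) z / dslope f 0 z
      + β * deriv (deriv g) z / deriv g z) := by
    rw [(Filter.eventuallyEq_of_mem (isOpen_ball.mem_nhds hz) hC').deriv_eq]
    exact (hhd z hz).deriv
  have hF0 := slitPlane_ne_zero (hFs z hz)
  have hg0 := slitPlane_ne_zero (hgs z hz)
  have hh0 : h z ≠ 0 :=
    mul_ne_zero (by simp [cpow_eq_zero_iff, hF0]) (by simp [cpow_eq_zero_iff, hg0])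
  have hid : 1 + z * deriv (deriv C) z / deriv C z = α * (deriv f z / dslope f 0 z)
      + β * (1 + z * deriv (deriv g) z / deriv g z) + ((1 - α - β : ℝ) : ℂ) := by
    rw [hC'', hC' z hz, ← dslope_zero_add_mul_deriv hf.1 hf.2.1 hz]
    push_cast
    field_simp
    ring
  have hgz := hg.2 z hz
  have hpz := hp z hz
  rw [hid, add_re, add_re, re_ofReal_mul, re_ofReal_mul, ofReal_re]
  rw [mem_ball, dist_eq_norm] at hpz
  have habs := (abs_re_le_norm _).trans_lt hpz
  rw [sub_re, show (2 / 3 : ℂ) = ((2 / 3 : ℝ) : ℂ) by push_cast; rfl, ofReal_re, abs_lt] at habs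
  set P := (deriv f z / dslope f 0 z).re
  set Q := (1 + z * deriv (deriv g) z / deriv g z).re
  have hP : 0 < P := by linarith [habs.1]
  have hP' : P < 4 / 3 := by linarith [habs.2]
  have hβQ : 0 ≤ β * Q := mul_nonneg hβ hgz.le
  rcases lt_or_ge α 0 with hα | hα
  · nlinarith [h2 hα, mul_pos_of_neg_of_neg hα (sub_neg.2 hP')]
  · rcases hα.eq_or_lt with h0 | hα'
    · subst h0
      rcases hβ.eq_or_lt with hb | hb
      · subst hb
        norm_num
      · nlinarith [h1 le_rfl, mul_pos hb hgz]
    · nlinarith [h1 hα, mul_pos hα' hP]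
end

section
/- Let f ∈ 𝒢 and α a real number with -3(1-λ) ≤ α ≤ 1-λ for some λ < 1. Then J_α[f](z) = ∫₀^z (f(w)/w)^α dw belongs to 𝒦(λ), i.e., Re(1 + z J_α[f]''(z)/J_α[f]'(z)) > λ on the unit disk. -/
open Complex Metric

open Filter Set Topology

/-- A function that vanishes at `0` and is nonnegative to the right of `0` has nonnegative
derivative there. -/
lemma deriv_nonneg_of_eventually_nonneg_right {F : ℝ → ℝ} {d : ℝ} (hF : HasDerivAt F d 0)
    (h0 : F 0 = 0) (hpos : ∀ᶠ t in 𝓝[>] (0 : ℝ), 0 ≤ F t) : 0 ≤ d := by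
  have h := hF.tendsto_slope_zero_right
  refine ge_of_tendsto h ?_
  filter_upwards [hpos, self_mem_nhdsWithin] with t ht ht0
  have : (0 : ℝ) < t := ht0
  simp only [zero_add, h0, sub_zero, smul_eq_mul]
  positivity

/-- **Jack's lemma** in normalized form: the maximum modulus `1` is attained with value `1`. -/
lemma jack_of_apply_eq_one {φ : ℂ → ℂ} {z₀ : ℂ} (hz₀ : z₀ ≠ 0)
    (hd : DifferentiableOn ℂ φ (ball 0 ‖z₀‖)) (hd₀ : DifferentiableAt ℂ φ z₀) (h0 : φ 0 = 0)
    (hle : ∀ z ∈ ball (0 : ℂ) ‖z₀‖, ‖φ z‖ ≤ 1) (h1 : φ z₀ = 1) :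
    ∃ m : ℝ, 1 ≤ m ∧ z₀ * deriv φ z₀ = m := by
  have hr : 0 < ‖z₀‖ := norm_pos_iff.2 hz₀
  have schwarz : ∀ z ∈ ball (0 : ℂ) ‖z₀‖, ‖φ z‖ ≤ ‖z‖ / ‖z₀‖ := by
    intro z hz
    have := dist_le_div_mul_dist_of_mapsTo_ball (R₂ := 1) hd
      (fun w hw ↦ by simpa [h0] using hle w hw) hz
    simpa [h0, div_eq_inv_mul] using this
  set c := z₀ * deriv φ z₀ with hc
  have key : ∀ y : ℝ, 1 ≤ c.re + y * c.im := by
    intro y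
    set v : ℂ := ⟨-1, y⟩ with hv
    have hline : HasDerivAt (fun t : ℝ ↦ z₀ + (t : ℂ) * (z₀ * v)) (z₀ * v) 0 := by
      simpa using ((hasDerivAt_id (0 : ℝ)).ofReal_comp.mul_const (z₀ * v)).const_add z₀
    have hφ : HasDerivAt (fun t : ℝ ↦ φ (z₀ + (t : ℂ) * (z₀ * v))) (deriv φ z₀ * (z₀ * v)) 0 := by
      have h : HasDerivAt φ (deriv φ z₀) (z₀ + ((0 : ℝ) : ℂ) * (z₀ * v)) := by
        simpa using hd₀.hasDerivAt
      exact h.comp (0 : ℝ) hline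
    have hre : HasDerivAt (fun t : ℝ ↦ (φ (z₀ + (t : ℂ) * (z₀ * v))).re)
        (deriv φ z₀ * (z₀ * v)).re 0 :=
      reCLM.hasFDerivAt.comp_hasDerivAt (0 : ℝ) hφ
    have hpoly : HasDerivAt (fun t : ℝ ↦ 1 - t + t ^ 2 * ((1 + y ^ 2) / 2)) (-1) 0 := by
      have := ((hasDerivAt_id (0 : ℝ)).const_sub 1).add
        (((hasDerivAt_id (0 : ℝ)).pow 2).mul_const ((1 + y ^ 2) / 2))
      simpa using! this
    have hval : (deriv φ z₀ * (z₀ * v)).re = -(c.re + y * c.im) := by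
      rw [show deriv φ z₀ * (z₀ * v) = c * v by rw [hc]; ring]
      simp [hv]; ring
    have := deriv_nonneg_of_eventually_nonneg_right (hpoly.sub hre) (by simp [h1]) ?_
    · rw [hval] at this; linarith
    have hsmall : ∀ᶠ t : ℝ in 𝓝[>] 0, t < 2 / (1 + y ^ 2) :=
      nhdsWithin_le_nhds (eventually_lt_nhds (by positivity))
    filter_upwards [hsmall, self_mem_nhdsWithin] with t ht ht0
    have ht0 : (0 : ℝ) < t := ht0
    have hsq : ‖1 + (t : ℂ) * v‖ ^ 2 = 1 - 2 * t + t ^ 2 * (1 + y ^ 2) := by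
      rw [← normSq_eq_norm_sq, normSq_apply]; simp [hv]; ring
    have hlt : ‖1 + (t : ℂ) * v‖ < 1 := by
      rw [lt_div_iff₀ (by positivity)] at ht
      have : t * (t * (1 + y ^ 2)) < t * 2 := mul_lt_mul_of_pos_left ht ht0
      nlinarith [norm_nonneg (1 + (t : ℂ) * v)]
    have hfac : z₀ + (t : ℂ) * (z₀ * v) = z₀ * (1 + t * v) := by ring
    have hmem : z₀ + (t : ℂ) * (z₀ * v) ∈ ball (0 : ℂ) ‖z₀‖ := by
      rw [mem_ball_zero_iff, hfac, norm_mul]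
      exact mul_lt_of_lt_one_right hr hlt
    have hb := schwarz _ hmem
    rw [hfac, norm_mul, mul_div_cancel_left₀ _ hr.ne', ← hfac] at hb
    have := (re_le_norm _).trans hb
    simp only [Pi.sub_apply]
    nlinarith [sq_nonneg (‖1 + (t : ℂ) * v‖ - 1)]
  have him : c.im = 0 := by
    by_contra h
    have := key (-c.re / c.im)
    rw [div_mul_cancel₀ _ h] at this
    linarith
  refine ⟨c.re, by simpa using key 0, ?_⟩
  apply Complex.ext <;> simp [him]

/-- **Jack's lemma**. -/
lemma jack {ω : ℂ → ℂ} {z₀ : ℂ} (hz₀ : z₀ ≠ 0)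
    (hd : DifferentiableOn ℂ ω (ball 0 ‖z₀‖)) (hd₀ : DifferentiableAt ℂ ω z₀) (h0 : ω 0 = 0)
    (hle : ∀ z ∈ ball (0 : ℂ) ‖z₀‖, ‖ω z‖ ≤ 1) (h1 : ‖ω z₀‖ = 1) :
    ∃ m : ℝ, 1 ≤ m ∧ z₀ * deriv ω z₀ = m * ω z₀ := by
  have hne : ω z₀ ≠ 0 := norm_ne_zero_iff.1 (by simp [h1])
  obtain ⟨m, hm, h⟩ := jack_of_apply_eq_one (φ := fun z ↦ ω z / ω z₀) hz₀ (hd.div_const _)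
    (hd₀.div_const _) (by simp [h0]) (fun z hz ↦ by simpa [h1] using hle z hz) (div_self hne)
  refine ⟨m, hm, ?_⟩
  rw [deriv_div_const] at h
  rw [← h]
  field_simp

/-- A domination principle for quotients of holomorphic functions on the unit disk, obtained by
applying Jack's lemma to `N / D` at a point of smallest modulus where `‖D‖ ≤ ‖N‖`. -/
lemma norm_lt_norm_of_no_contact {N D : ℂ → ℂ} (hN : DifferentiableOn ℂ N (ball 0 1))
    (hD : DifferentiableOn ℂ D (ball 0 1)) (hN0 : N 0 = 0)
    (hne : ∀ z ∈ ball (0 : ℂ) 1, N z = 0 → D z ≠ 0)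
    (hcontact : ∀ z ∈ ball (0 : ℂ) 1, ∀ m : ℝ, 1 ≤ m → ‖N z‖ = ‖D z‖ →
      z * (deriv N z * D z - N z * deriv D z) ≠ m * (N z * D z)) :
    ∀ z ∈ ball (0 : ℂ) 1, ‖N z‖ < ‖D z‖ := by
  intro z₁ hz₁
  by_contra! hbad
  have hsub : closedBall (0 : ℂ) ‖z₁‖ ⊆ ball 0 1 :=
    closedBall_subset_ball (mem_ball_zero_iff.1 hz₁)
  have hclosed : IsClosed {z ∈ closedBall (0 : ℂ) ‖z₁‖ | ‖D z‖ ≤ ‖N z‖} :=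
    isClosed_closedBall.isClosed_le (hD.continuousOn.mono hsub).norm
      (hN.continuousOn.mono hsub).norm
  have hcomp : IsCompact {z ∈ closedBall (0 : ℂ) ‖z₁‖ | ‖D z‖ ≤ ‖N z‖} :=
    (isCompact_closedBall (0 : ℂ) ‖z₁‖).of_isClosed_subset hclosed (sep_subset _ _)
  obtain ⟨z₀, ⟨hz₀, hle₀⟩, hmin⟩ :=
    hcomp.exists_isMinOn ⟨z₁, by simp, hbad⟩ continuous_norm.continuousOn
  have hz₀1 := hsub hz₀
  have hlt : ∀ z ∈ ball (0 : ℂ) ‖z₀‖, ‖N z‖ < ‖D z‖ := by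
    intro z hz
    by_contra! h
    rw [mem_ball_zero_iff] at hz
    rw [mem_closedBall_zero_iff] at hz₀
    exact (hmin ⟨mem_closedBall_zero_iff.2 (hz.le.trans hz₀), h⟩ : ‖z₀‖ ≤ ‖z‖).not_gt hz
  have hz₀ne : z₀ ≠ 0 := by
    rintro rfl
    rw [hN0, norm_zero, norm_le_zero_iff] at hle₀
    exact hne 0 hz₀1 hN0 hle₀
  have hsub₀ : ball (0 : ℂ) ‖z₀‖ ⊆ ball 0 1 := ball_subset_ball (mem_ball_zero_iff.1 hz₀1).le
  have hNd : DifferentiableAt ℂ N z₀ := hN.differentiableAt (isOpen_ball.mem_nhds hz₀1)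
  have hDd : DifferentiableAt ℂ D z₀ := hD.differentiableAt (isOpen_ball.mem_nhds hz₀1)
  have heq : ‖N z₀‖ = ‖D z₀‖ := by
    refine le_antisymm ?_ hle₀
    have hmem : z₀ ∈ closure (ball (0 : ℂ) ‖z₀‖) := by
      rw [closure_ball _ (norm_ne_zero_iff.2 hz₀ne)]; simp
    have := mem_closure_iff_nhdsWithin_neBot.1 hmem
    exact le_of_tendsto_of_tendsto (hNd.continuousAt.norm.tendsto.mono_left nhdsWithin_le_nhds)
      (hDd.continuousAt.norm.tendsto.mono_left nhdsWithin_le_nhds)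
      (eventually_of_mem self_mem_nhdsWithin fun z hz ↦ (hlt z hz).le)
  have hD0 : D z₀ ≠ 0 := by
    intro h
    refine hne z₀ hz₀1 ?_ h
    rwa [h, norm_zero, norm_eq_zero] at heq
  have hDne : ∀ z ∈ ball (0 : ℂ) ‖z₀‖, D z ≠ 0 := fun z hz ↦
    norm_pos_iff.1 ((norm_nonneg _).trans_lt (hlt z hz))
  obtain ⟨m, hm, h⟩ := jack (ω := fun z ↦ N z / D z) hz₀ne
    ((hN.mono hsub₀).div (hD.mono hsub₀) hDne) (hNd.div hDd hD0) (by simp [hN0])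
    (fun z hz ↦ by
      rw [norm_div]; exact div_le_one_of_le₀ (hlt z hz).le (norm_nonneg _))
    (by rw [norm_div, heq, div_self (norm_ne_zero_iff.2 hD0)])
  refine hcontact z₀ hz₀1 m hm heq ?_
  rw [deriv_fun_div hNd hDd hD0] at h
  field_simp at h
  linear_combination h

/-- If `2‖u‖ = ‖1 - u‖`, then `Re ((2u + k u (1 - u)) / (1 + u)) ≥ 1 / 2` for `k ≥ 0`. -/
lemma half_le_re_of_norm_eq {u : ℂ} {k : ℝ} (hk : 0 ≤ k) (hu : 2 * ‖u‖ = ‖1 - u‖)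
    (hne : 1 + u ≠ 0) : 1 / 2 ≤ ((2 * u + k * (u * (1 - u))) / (1 + u)).re := by
  obtain ⟨x, y⟩ := u
  have hsq : 4 * (x ^ 2 + y ^ 2) = (1 - x) ^ 2 + y ^ 2 := by
    have h := congrArg (· ^ 2) hu
    simp only [mul_pow, ← normSq_eq_norm_sq, normSq_apply] at h
    simp at h
    linarith
  have hpos : 0 < (1 + x) ^ 2 + y ^ 2 := by
    have := normSq_pos.2 hne
    simp [normSq_apply] at this
    linarith
  have hs : x ^ 2 + y ^ 2 ≤ 1 := by nlinarith [sq_nonneg y, sq_nonneg (x + 1)]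
  rw [Complex.div_re, ← add_div, le_div_iff₀ (normSq_pos.2 hne)]
  simp [normSq_apply, -one_div]
  have h3 : 0 ≤ k * (3 * (x ^ 2 + y ^ 2) * (1 - (x ^ 2 + y ^ 2))) := by
    have : 0 ≤ 1 - (x ^ 2 + y ^ 2) := by linarith
    positivity
  have hy : y ^ 2 = (1 - 2 * x - 3 * x ^ 2) / 3 := by linarith
  have hid : ((x * (1 - x) + y * y) * (1 + x) + (x * -y + y * (1 - x)) * y) =
      3 * (x ^ 2 + y ^ 2) * (1 - (x ^ 2 + y ^ 2)) := by
    rw [hy]; ring_nf; rw [hy]; ring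
  nlinarith

/-- If `2‖u‖ < ‖1 - u‖`, then `-1 < Re u < 1 / 3`. -/
lemma re_mem_Ioo_of_norm_lt {u : ℂ} (hu : 2 * ‖u‖ < ‖1 - u‖) : u.re ∈ Ioo (-1) (1 / 3) := by
  obtain ⟨x, y⟩ := u
  have hsq : 4 * (x ^ 2 + y ^ 2) < (1 - x) ^ 2 + y ^ 2 := by
    have h := pow_lt_pow_left₀ hu (by positivity) two_ne_zero
    simp only [mul_pow, ← normSq_eq_norm_sq, normSq_apply] at h
    simp at h
    linarith
  constructor <;> simp only <;> nlinarith [sq_nonneg y, sq_nonneg (x + 1)]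

/-- If `f z = z g z` is in `𝒢`, then the logarithmic derivative `u = z g'(z) / g z` lies in
the disk `2‖u‖ < ‖1 - u‖`. -/
lemma norm_two_mul_deriv_lt {g : ℂ → ℂ} (hg : DifferentiableOn ℂ g (ball 0 1))
    (hf' : ∀ z ∈ ball (0 : ℂ) 1, g z + z * deriv g z ≠ 0)
    (hG : ∀ z ∈ ball (0 : ℂ) 1,
      (z * (2 * deriv g z + z * deriv (deriv g) z) / (g z + z * deriv g z)).re < 1 / 2) :
    ∀ z ∈ ball (0 : ℂ) 1, ‖2 * (z * deriv g z)‖ < ‖g z - z * deriv g z‖ := by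
  have hg' : DifferentiableOn ℂ (deriv g) (ball 0 1) := hg.deriv isOpen_ball
  refine norm_lt_norm_of_no_contact (by fun_prop) (by fun_prop) (by simp) ?_ ?_
  · intro z hz h1 h2
    have h3 : z * deriv g z = 0 := by simpa using h1
    refine hf' z hz ?_
    linear_combination h2 + 2 * h3
  · intro z hz m hm heq h
    have d1 : HasDerivAt g (deriv g z) z :=
      (hg.differentiableAt (isOpen_ball.mem_nhds hz)).hasDerivAt
    have d2 : HasDerivAt (deriv g) (deriv (deriv g) z) z :=
      (hg'.differentiableAt (isOpen_ball.mem_nhds hz)).hasDerivAt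
    have d3 : HasDerivAt (fun z ↦ z * deriv g z) (deriv g z + z * deriv (deriv g) z) z := by
      simpa using! (hasDerivAt_id z).mul d2
    rw [(d3.const_mul 2).deriv, (d1.fun_sub d3).deriv] at h
    have hP := hf' z hz
    have hre := hG z hz
    set a := z * deriv g z with ha
    set b := z * (z * deriv (deriv g) z) with hb
    have hgne : g z ≠ 0 := by
      intro h0
      have : ‖a‖ = 0 := by
        rw [h0, norm_mul, zero_sub, norm_neg, Complex.norm_ofNat] at heq
        linarith
      exact hP (by rw [h0, norm_eq_zero.1 this, zero_add])
    have hbg : b * g z = (m - 1) * (a * (g z - a)) := by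
      have : 2 * (b * g z) = 2 * ((m - 1) * (a * (g z - a))) := by
        linear_combination h
      exact mul_left_cancel₀ two_ne_zero this
    set u := a / g z with hu
    have hau : a = g z * u := by rw [hu]; field_simp
    have hbu : b = g z * ((m - 1) * (u * (1 - u))) := by
      apply mul_right_cancel₀ hgne
      rw [hbg, hau]; ring
    have hnorm : 2 * ‖u‖ = ‖1 - u‖ := by
      rw [hau, show 2 * (g z * u) = g z * (2 * u) by ring,
        show g z - g z * u = g z * (1 - u) by ring, norm_mul, norm_mul, norm_mul,
        Complex.norm_ofNat] at heq
      exact mul_left_cancel₀ (norm_ne_zero_iff.2 hgne) heq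
    have hP' : 1 + u ≠ 0 := by
      intro h0
      exact hP (by rw [hau]; linear_combination g z * h0)
    have hfin := half_le_re_of_norm_eq (sub_nonneg.2 hm) hnorm hP'
    rw [show z * (2 * deriv g z + z * deriv (deriv g) z) = g z * (2 * u + ((m - 1 : ℝ) : ℂ) *
        (u * (1 - u))) by push_cast; linear_combination 2 * hau + hbu + 2 * ha + hb,
      show g z + a = g z * (1 + u) by rw [hau]; ring, mul_div_mul_left _ _ hgne] at hre
    linarith

/-- If `g 0 = 1` and `Re (z g'(z) / g z) < 1 / 2` on the disk, then `‖1 - g‖ < 1`. -/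
lemma norm_one_sub_lt_one {g : ℂ → ℂ} (hg : DifferentiableOn ℂ g (ball 0 1)) (hg0 : g 0 = 1)
    (hne : ∀ z ∈ ball (0 : ℂ) 1, g z ≠ 0)
    (hre : ∀ z ∈ ball (0 : ℂ) 1, (z * deriv g z / g z).re < 1 / 2) :
    ∀ z ∈ ball (0 : ℂ) 1, ‖1 - g z‖ < 1 := by
  have key := norm_lt_norm_of_no_contact (N := fun z ↦ 1 - g z) (D := fun _ ↦ 1) (by fun_prop)
    (by fun_prop) (by simp [hg0]) (by simp) ?_
  · simpa using key
  · intro z hz m hm heq h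
    have d1 : HasDerivAt g (deriv g z) z :=
      (hg.differentiableAt (isOpen_ball.mem_nhds hz)).hasDerivAt
    rw [(d1.const_sub 1).deriv, deriv_const] at h
    have h' : z * deriv g z = m * (g z - 1) := by linear_combination -h
    have hgz := hne z hz
    have hlt := hre z hz
    rw [h', mul_div_assoc, re_ofReal_mul, sub_div, div_self hgz, sub_re, one_re, one_div,
      Complex.inv_re] at hlt
    have hn : normSq (1 - g z) = 1 := by rw [normSq_eq_norm_sq, heq]; simp
    have hn' : normSq (g z) = 2 * (g z).re := by
      simp only [normSq_apply, sub_re, sub_im, one_re, one_im] at hn ⊢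
      linarith
    have hpos := normSq_pos.2 hgz
    have : (g z).re / normSq (g z) = 1 / 2 := by
      rw [div_eq_iff hpos.ne', hn']
      ring
    rw [this] at hlt
    linarith

/-- Integrating along radii a function holomorphic on a disk gives a primitive. -/
lemma hasDerivAt_radial_integral {h J : ℂ → ℂ} (hh : DifferentiableOn ℂ h (ball 0 1))
    (hJ : ∀ z ∈ ball (0 : ℂ) 1, J z = ∫ t in (0 : ℝ)..1, h (t * z) * z) :
    ∀ z ∈ ball (0 : ℂ) 1, HasDerivAt J (h z) z := by
  obtain ⟨H, hH⟩ := hh.isExactOn_ball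
  have hJH : ∀ z ∈ ball (0 : ℂ) 1, J z = H z - H 0 := by
    intro z hz
    have hmem : ∀ t ∈ uIcc (0 : ℝ) 1, (t : ℂ) * z ∈ ball (0 : ℂ) 1 := by
      intro t ht
      rw [uIcc_of_le zero_le_one] at ht
      rw [mem_ball_zero_iff] at hz ⊢
      rw [norm_mul, norm_real, Real.norm_of_nonneg ht.1]
      exact (mul_le_of_le_one_left (norm_nonneg z) ht.2).trans_lt hz
    have hderiv : ∀ t ∈ uIcc (0 : ℝ) 1,
        HasDerivAt (fun t : ℝ ↦ H (t * z)) (h (t * z) * z) t := by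
      intro t ht
      have hl : HasDerivAt (fun t : ℝ ↦ (t : ℂ) * z) z t := by
        simpa using (hasDerivAt_id t).ofReal_comp.mul_const z
      exact (hH _ (hmem t ht)).comp t hl
    have hcont : ContinuousOn (fun t : ℝ ↦ h (t * z) * z) (uIcc 0 1) :=
      (hh.continuousOn.comp (by fun_prop) hmem).mul continuousOn_const
    rw [hJ z hz, intervalIntegral.integral_eq_sub_of_hasDerivAt hderiv hcont.intervalIntegrable]
    simp
  intro z hz
  refine ((hH z hz).sub_const (H 0)).congr_of_eventuallyEq ?_
  filter_upwards [isOpen_ball.mem_nhds hz] with w hw using hJH w hw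

/-- for `f ∈ 𝒢` and `-3(1-λ) ≤ α ≤ 1-λ` with `λ < 1`, the function
`J_α[f](z) = ∫₀^z (f(w)/w)^α dw` belongs to `𝒦(λ)`. -/
theorem stmt_19 (f : ℂ → ℂ) (hf : Fclass f)
    (hG : ∀ z ∈ ball (0:ℂ) 1,
      (1 + z * deriv (deriv f) z / deriv f z).re < 3 / 2)
    (lam α : ℝ) (hlam : lam < 1)
    (hα1 : -3 * (1 - lam) ≤ α) (hα2 : α ≤ 1 - lam)
    (J : ℂ → ℂ)
    (hJ : ∀ z ∈ ball (0:ℂ) 1,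
      J z = ∫ t in (0:ℝ)..1,
        (f ((t : ℂ) * z) / ((t : ℂ) * z)) ^ (α : ℂ) * z) :
    ∀ z ∈ ball (0:ℂ) 1,
      lam < (1 + z * deriv (deriv J) z / deriv J z).re := by
  obtain ⟨hfd, hf0, hf1, hfne⟩ := hf
  set g : ℂ → ℂ := dslope f 0 with hgdef
  have hg : DifferentiableOn ℂ g (ball 0 1) :=
    (Complex.differentiableOn_dslope (ball_mem_nhds _ one_pos)).2 hfd
  have hg' : DifferentiableOn ℂ (deriv g) (ball 0 1) := hg.deriv isOpen_ball
  have hg0 : g 0 = 1 := by rw [hgdef, dslope_same, hf1]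
  have hfg : ∀ z, f z = z * g z := fun z ↦ by
    simpa [hf0] using (sub_smul_dslope f 0 z).symm
  have dg : ∀ z ∈ ball (0 : ℂ) 1, HasDerivAt g (deriv g z) z := fun z hz ↦
    (hg.differentiableAt (isOpen_ball.mem_nhds hz)).hasDerivAt
  have hderiv : ∀ z ∈ ball (0 : ℂ) 1, deriv f z = g z + z * deriv g z := by
    intro z hz
    have : HasDerivAt f (1 * g z + z * deriv g z) z := by
      rw [show f = fun z ↦ z * g z from funext hfg]
      exact (hasDerivAt_id z).mul (dg z hz)
    rw [this.deriv, one_mul]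
  have hderiv2 : ∀ z ∈ ball (0 : ℂ) 1,
      deriv (deriv f) z = 2 * deriv g z + z * deriv (deriv g) z := by
    intro z hz
    have hev : deriv f =ᶠ[𝓝 z] fun z ↦ g z + z * deriv g z := by
      filter_upwards [isOpen_ball.mem_nhds hz] with w hw using hderiv w hw
    have d2 := (hg'.differentiableAt (isOpen_ball.mem_nhds hz)).hasDerivAt
    have : HasDerivAt (fun z ↦ g z + z * deriv g z)
        (deriv g z + (1 * deriv g z + z * deriv (deriv g) z)) z :=
      (dg z hz).add ((hasDerivAt_id z).mul d2)
    rw [hev.deriv_eq, this.deriv]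
    ring
  have hdisk : ∀ z ∈ ball (0 : ℂ) 1, ‖2 * (z * deriv g z)‖ < ‖g z - z * deriv g z‖ := by
    refine norm_two_mul_deriv_lt hg (fun z hz ↦ hderiv z hz ▸ hfne z hz) fun z hz ↦ ?_
    have := hG z hz
    rw [hderiv z hz, hderiv2 z hz, add_re, one_re] at this
    linarith
  have hgne : ∀ z ∈ ball (0 : ℂ) 1, g z ≠ 0 := by
    intro z hz h0
    have := hdisk z hz
    rw [h0, norm_mul, zero_sub, norm_neg, Complex.norm_ofNat] at this
    linarith [norm_nonneg (z * deriv g z)]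
  have hu : ∀ z ∈ ball (0 : ℂ) 1, (z * deriv g z / g z).re ∈ Ioo (-1) (1 / 3) := by
    intro z hz
    have hgz := hgne z hz
    refine re_mem_Ioo_of_norm_lt ?_
    have := hdisk z hz
    rw [show 1 - z * deriv g z / g z = (g z - z * deriv g z) / g z by field_simp, norm_div,
      norm_div, ← mul_div_assoc]
    rw [norm_mul, Complex.norm_ofNat] at this
    exact div_lt_div_of_pos_right this (norm_pos_iff.2 hgz)
  have hslit : ∀ z ∈ ball (0 : ℂ) 1, g z ∈ slitPlane := by
    intro z hz
    have h := norm_one_sub_lt_one hg hg0 hgne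
      (fun w hw ↦ (hu w hw).2.trans (by norm_num)) z hz
    have := (re_le_norm _).trans_lt h
    rw [sub_re, one_re] at this
    exact Or.inl (by linarith)
  have dh : ∀ z ∈ ball (0 : ℂ) 1, HasDerivAt (fun w ↦ g w ^ (α : ℂ))
      (α * g z ^ ((α : ℂ) - 1) * deriv g z) z := fun z hz ↦ (dg z hz).cpow_const (hslit z hz)
  have dJ : ∀ z ∈ ball (0 : ℂ) 1, HasDerivAt J (g z ^ (α : ℂ)) z := by
    refine hasDerivAt_radial_integral (h := fun w ↦ g w ^ (α : ℂ))
      (fun z hz ↦ (dh z hz).differentiableAt.differentiableWithinAt) fun z hz ↦ ?_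
    rw [hJ z hz]
    refine intervalIntegral.integral_congr_ae (Eventually.of_forall fun t ht ↦ ?_)
    rw [uIoc_of_le zero_le_one] at ht
    rcases eq_or_ne z 0 with rfl | hz0
    · simp
    · have ht0 : (t : ℂ) ≠ 0 := ofReal_ne_zero.2 ht.1.ne'
      rw [hfg, mul_div_cancel_left₀ _ (mul_ne_zero ht0 hz0)]
  intro z hz
  have hev : deriv J =ᶠ[𝓝 z] fun w ↦ g w ^ (α : ℂ) := by
    filter_upwards [isOpen_ball.mem_nhds hz] with w hw using (dJ w hw).deriv
  have hgz := hgne z hz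
  have hpow : g z ^ (α : ℂ) ≠ 0 := by simp [cpow_eq_zero_iff, hgz]
  have hquot : z * deriv (deriv J) z / deriv J z = α * (z * deriv g z / g z) := by
    rw [hev.deriv_eq, (dh z hz).deriv, (dJ z hz).deriv, cpow_sub _ _ hgz, cpow_one]
    field_simp
  obtain ⟨h1, h2⟩ := hu z hz
  rw [hquot, add_re, one_re, re_ofReal_mul]
  rcases lt_trichotomy α 0 with hα | rfl | hα
  · nlinarith [mul_lt_mul_of_neg_left h2 hα]
  · linarith
  · nlinarith [mul_lt_mul_of_pos_left h1 hα]
end
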